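/- Let u : ℝ³ → ℂ be differentiable with u, ∇u ∈ L²(ℝ³) and ‖u‖_{L²} = 1, and let α : ℝ³ → ℂ be measurable with ∫ B₀(k)|α(k)| dk < ∞ and ∫ |k|B₀(k)|α(k)| dk < ∞. Define φ̃_α(x) = 2 Im ∫ B₀(k)e^{ik·x}α(k) dk, τ_{u,α}(x) = φ̃_α(x) − (1/2)∫ φ̃_α(y)|u(y)|² dy, u^θ(x) = e^{−iθτ_{u,α}(x)}u(x), and F_α(x) = 2 Re ∫ k B₀(k) e^{ik·x} α(k) dk. Then τ_{u,α} is differentiable with ∇τ_{u,α}(x) = F_α(x); consequently u^θ is differentiable with ∇u^θ(x) = e^{−iθτ_{u,α}(x)}(∇u(x) − iθ F_α(x) u(x)), and for every s > 0 there is a constant C = C(s), independent of u, α, θ, such that ‖∇u^θ‖_{L²} ≤ ‖∇u‖_{L²} + C|θ|·‖α‖_{h_s}. -/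

import Mathlib

open MeasureTheory
open scoped ENNReal

noncomputable section

/-- The dispersion relation `ω(k) = √(1+|k|²)` of the massive scalar field. -/
def ω (k : EuclideanSpace ℝ (Fin 3)) : ℝ := Real.sqrt (1 + ‖k‖ ^ 2)

/-- The Gross dressing form factor `B₀(k) = 1/(√(ω(k))·(|k|²+ω(k)))`. -/
def B0 (k : EuclideanSpace ℝ (Fin 3)) : ℝ := 1 / (Real.sqrt (ω k) * (‖k‖ ^ 2 + ω k))

/-- `φ̃_α(x) = 2 Im ∫ B₀(k) e^{ik·x} α(k) dk`. -/
def phitilde (α : EuclideanSpace ℝ (Fin 3) → ℂ) (x : EuclideanSpace ℝ (Fin 3)) : ℝ :=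
  2 * (∫ k, ((B0 k : ℝ) : ℂ) * Complex.exp (Complex.I * ((inner ℝ k x : ℝ) : ℂ)) * α k).im

/-- `τ_{u,α}(x) = φ̃_α(x) − ½⟨u, φ̃_α u⟩`. -/
def tau (u α : EuclideanSpace ℝ (Fin 3) → ℂ) (x : EuclideanSpace ℝ (Fin 3)) : ℝ :=
  phitilde α x - (1 / 2) * ∫ y, phitilde α y * ‖u y‖ ^ 2

/-- The particle component of the mean-field dressing flow,
`u^θ(x) = e^{−iθτ_{u,α}(x)} u(x)`. -/
def uθ (u α : EuclideanSpace ℝ (Fin 3) → ℂ) (θ : ℝ) (x : EuclideanSpace ℝ (Fin 3)) : ℂ :=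
  Complex.exp (-(Complex.I * (θ : ℂ) * ((tau u α x : ℝ) : ℂ))) * u x

/-- The dressed vector potential `F_α(x) = 2 Re ∫ k B₀(k) e^{ik·x} α(k) dk ∈ ℝ³`. -/
def FαVec (α : EuclideanSpace ℝ (Fin 3) → ℂ) (x : EuclideanSpace ℝ (Fin 3)) :
    EuclideanSpace ℝ (Fin 3) :=
  (WithLp.equiv 2 (Fin 3 → ℝ)).symm fun j =>
    2 * (∫ k, ((k j * B0 k : ℝ) : ℂ) *
      Complex.exp (Complex.I * ((inner ℝ k x : ℝ) : ℂ)) * α k).re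

/-!
Differentiating `φ̃_α` under the integral sign, with
`∇ₓ Im(e^{ik·x} B₀(k) α(k)) = Re(e^{ik·x} B₀(k) α(k)) k`, gives `∇τ = F_α` together with the uniform
bound `|F_α| ≤ 2 ∫ |k| B₀ |α|`. The phase `e^{−iθτ}` has modulus one, so
`|∇u^θ| ≤ |∇u| + |θ| |F_α| |u|`, and by Minkowski's inequality only `∫ |k| B₀ |α| ≤ C ‖α‖_{h_s}`
remains. This is the Cauchy–Schwarz inequality with weight `ω^s`: as `|k| B₀ ≤ ω^{−3/2}`, the factor
`|k| B₀ ω^{−s}` is square integrable on `ℝ³` as soon as `s > 0`.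
-/

section PlaneWave

variable {V : Type*} [NormedAddCommGroup V] [InnerProductSpace ℝ V]

/-- The plane wave `e^{ik·x}`, with the wave vector `k` as first argument. -/
def planeWave (k x : V) : ℂ := Complex.exp (Complex.I * ((inner ℝ k x : ℝ) : ℂ))

lemma norm_planeWave (k x : V) : ‖planeWave k x‖ = 1 := by
  rw [planeWave, mul_comm, Complex.norm_exp_ofReal_mul_I]

lemma continuous_planeWave_left (x : V) : Continuous fun k : V => planeWave k x := by
  unfold planeWave
  fun_prop

lemma norm_re_planeWave_mul_smul_le (k x : V) (c : ℂ) :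
    ‖(planeWave k x * c).re • k‖ ≤ ‖k‖ * ‖c‖ := by
  calc ‖(planeWave k x * c).re • k‖ ≤ ‖planeWave k x * c‖ * ‖k‖ := by
        rw [norm_smul]
        gcongr
        exact Complex.abs_re_le_norm _
    _ = ‖k‖ * ‖c‖ := by rw [norm_mul, norm_planeWave, one_mul, mul_comm]

lemma hasFDerivAt_im_planeWave_mul (k x : V) (c : ℂ) :
    HasFDerivAt (fun y => (planeWave k y * c).im)
      (innerSL ℝ ((planeWave k x * c).re • k)) x := by
  have h_phase : HasFDerivAt (fun y : V => ((inner ℝ k y : ℝ) : ℂ))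
      (Complex.ofRealCLM.comp (innerSL ℝ k)) x :=
    (Complex.ofRealCLM.comp (innerSL ℝ k)).hasFDerivAt
  refine (Complex.imCLM.hasFDerivAt.comp x
    ((h_phase.const_mul Complex.I).cexp.mul_const c)).congr_fderiv ?_
  ext v
  simp only [planeWave, ContinuousLinearMap.comp_apply, smul_apply, coe_innerSL_apply, map_smul,
    Complex.ofRealCLM_apply, Complex.imCLM_apply, smul_eq_mul, Complex.mul_im, Complex.mul_re,
    Complex.I_re, Complex.I_im, Complex.ofReal_re, Complex.ofReal_im]
  ring

variable [MeasurableSpace V] [OpensMeasurableSpace V] {μ : Measure V} {g : V → ℂ}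

lemma integrable_planeWave_mul (hg : Integrable g μ) (x : V) :
    Integrable (fun k => planeWave k x * g k) μ :=
  hg.mono ((continuous_planeWave_left x).aestronglyMeasurable.mul hg.aestronglyMeasurable)
    (.of_forall fun k => by rw [norm_mul, norm_planeWave, one_mul])

variable [SecondCountableTopology V]

lemma integrable_re_planeWave_mul_smul (hg : AEStronglyMeasurable g μ)
    (hkg : Integrable (fun k => ‖k‖ * ‖g k‖) μ) (x : V) :
    Integrable (fun k => (planeWave k x * g k).re • k) μ := by
  have h_meas : AEStronglyMeasurable (fun k => planeWave k x * g k) μ :=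
    (continuous_planeWave_left x).aestronglyMeasurable.mul hg
  exact hkg.mono' ((Complex.continuous_re.comp_aestronglyMeasurable h_meas).smul
    continuous_id.aestronglyMeasurable) (.of_forall fun k => norm_re_planeWave_mul_smul_le k x _)

lemma hasFDerivAt_im_integral_planeWave_mul [CompleteSpace V] (hg : Integrable g μ)
    (hkg : Integrable (fun k => ‖k‖ * ‖g k‖) μ) (x : V) :
    HasFDerivAt (fun y => (∫ k, planeWave k y * g k ∂μ).im)
      (innerSL ℝ (∫ k, (planeWave k x * g k).re • k ∂μ)) x := by
  have h_im (y : V) : ∫ k, (planeWave k y * g k).im ∂μ = (∫ k, planeWave k y * g k ∂μ).im :=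
    integral_im (integrable_planeWave_mul hg y)
  have h_grad := integrable_re_planeWave_mul_smul hg.aestronglyMeasurable hkg x
  have h_grad_innerSL := (innerSL ℝ).integrable_comp h_grad
  simp_rw [← h_im]
  rw [← (innerSL ℝ).integral_comp_comm h_grad]
  exact hasFDerivAt_integral_of_dominated_of_fderiv_le
    (bound := fun k => ‖k‖ * ‖g k‖) Filter.univ_mem
    (.of_forall fun y => (integrable_planeWave_mul hg y).im.aestronglyMeasurable)
    (integrable_planeWave_mul hg x).im h_grad_innerSL.aestronglyMeasurable
    (.of_forall fun k y _ => by
      rw [innerSL_apply_norm]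
      exact norm_re_planeWave_mul_smul_le k y _)
    hkg (.of_forall fun k y _ => hasFDerivAt_im_planeWave_mul k y _)

end PlaneWave

section Phase

variable {E : Type*} [NormedAddCommGroup E] [NormedSpace ℝ E]

lemma norm_exp_neg_I_mul_mul (θ t : ℝ) :
    ‖Complex.exp (-(Complex.I * (θ : ℂ) * (t : ℂ)))‖ = 1 := by
  simp [Complex.norm_exp]

lemma hasFDerivAt_exp_neg_I_mul_mul {τ : E → ℝ} {τ' : E →L[ℝ] ℝ} {u : E → ℂ} {u' : E →L[ℝ] ℂ}
    {x : E} (hτ : HasFDerivAt τ τ' x) (hu : HasFDerivAt u u' x) (θ : ℝ) :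
    HasFDerivAt (fun y => Complex.exp (-(Complex.I * (θ : ℂ) * (τ y : ℂ))) * u y)
      (Complex.exp (-(Complex.I * (θ : ℂ) * (τ x : ℂ))) •
        (u' - (Complex.I * (θ : ℂ) * u x) • Complex.ofRealCLM.comp τ')) x := by
  have h_phase : HasFDerivAt (fun y => (τ y : ℂ)) (Complex.ofRealCLM.comp τ') x :=
    Complex.ofRealCLM.hasFDerivAt.comp x hτ
  refine ((h_phase.const_mul (Complex.I * (θ : ℂ))).fun_neg.cexp.mul hu).congr_fderiv ?_
  ext v
  simp only [add_apply, sub_apply, neg_apply, smul_apply, smul_neg, smul_eq_mul,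
    ContinuousLinearMap.comp_apply, Complex.ofRealCLM_apply]
  ring

end Phase

lemma eLpNorm_two_eq_lintegral_ofReal_sq {X F : Type*} [MeasurableSpace X] [NormedAddCommGroup F]
    (f : X → F) (μ : Measure X) :
    eLpNorm f 2 μ = (∫⁻ x, ENNReal.ofReal (‖f x‖ ^ 2) ∂μ) ^ (1 / 2 : ℝ) := by
  simp [eLpNorm_eq_lintegral_rpow_enorm_toReal, ENNReal.ofReal_pow]

lemma eLpNorm_le_add_mul_of_norm_le {X F G H : Type*} [MeasurableSpace X] {μ : Measure X}
    [NormedAddCommGroup F] [NormedAddCommGroup G] [NormedAddCommGroup H]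
    {f : X → F} {g : X → G} {h : X → H} {c : ℝ} {p : ℝ≥0∞} (hp : 1 ≤ p)
    (hg : AEStronglyMeasurable g μ) (hh : AEStronglyMeasurable h μ)
    (hfgh : ∀ᵐ x ∂μ, ‖f x‖ ≤ ‖g x‖ + c * ‖h x‖) :
    eLpNorm f p μ ≤ eLpNorm g p μ + ‖c‖ₑ * eLpNorm h p μ :=
  calc eLpNorm f p μ ≤ eLpNorm ((fun x => ‖g x‖) + c • fun x => ‖h x‖) p μ :=
        eLpNorm_mono_ae_real hfgh
    _ ≤ eLpNorm (fun x => ‖g x‖) p μ + eLpNorm (c • fun x => ‖h x‖) p μ :=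
        eLpNorm_add_le hg.norm (hh.norm.const_smul c) hp
    _ = eLpNorm g p μ + ‖c‖ₑ * eLpNorm h p μ := by
        rw [eLpNorm_const_smul, eLpNorm_norm, eLpNorm_norm]

lemma eLpNorm_two_eq_one {X F : Type*} [MeasurableSpace X] {μ : Measure X} [NormedAddCommGroup F]
    {f : X → F} (h : ∫ x, ‖f x‖ ^ 2 ∂μ = 1) : eLpNorm f 2 μ = 1 := by
  have h_int : Integrable (fun x => ‖f x‖ ^ 2) μ := .of_integral_ne_zero (by simp [h])
  rw [eLpNorm_two_eq_lintegral_ofReal_sq, ← ofReal_integral_eq_lintegral_ofReal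
    h_int (.of_forall fun x => by positivity), h, ENNReal.ofReal_one,
    ENNReal.one_rpow]

section FormFactor

lemma ω_pos (k : EuclideanSpace ℝ (Fin 3)) : 0 < ω k := Real.sqrt_pos.2 (by positivity)

lemma ω_sq (k : EuclideanSpace ℝ (Fin 3)) : ω k ^ 2 = 1 + ‖k‖ ^ 2 := Real.sq_sqrt (by positivity)

lemma norm_le_ω (k : EuclideanSpace ℝ (Fin 3)) : ‖k‖ ≤ ω k :=
  Real.le_sqrt_of_sq_le (by linarith)

lemma ω_le_one_add_norm (k : EuclideanSpace ℝ (Fin 3)) : ω k ≤ 1 + ‖k‖ :=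
  (Real.sqrt_le_left (by positivity)).2 (by nlinarith [norm_nonneg k])

lemma continuous_ω : Continuous ω := by
  unfold ω
  fun_prop

lemma continuous_ω_rpow (r : ℝ) : Continuous fun k => ω k ^ r :=
  continuous_ω.rpow_const fun k => .inl (ω_pos k).ne'

lemma B0_pos (k : EuclideanSpace ℝ (Fin 3)) : 0 < B0 k := by
  have := ω_pos k
  unfold B0
  positivity

lemma norm_B0_mul (k : EuclideanSpace ℝ (Fin 3)) (z : ℂ) : ‖(B0 k : ℂ) * z‖ = B0 k * ‖z‖ := by
  rw [norm_mul, Complex.norm_of_nonneg (B0_pos k).le]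

lemma continuous_B0 : Continuous B0 := by
  have := continuous_ω
  refine continuous_const.div (by fun_prop) fun k => ?_
  have := ω_pos k
  positivity

lemma norm_mul_B0_le (k : EuclideanSpace ℝ (Fin 3)) : ‖k‖ * B0 k ≤ ω k ^ (-(3 / 2) : ℝ) := by
  have hω := ω_pos k
  have h_denom : ‖k‖ * ω k ≤ ‖k‖ ^ 2 + ω k := by
    calc ‖k‖ * ω k ≤ ‖k‖ * (1 + ‖k‖) := by
          gcongr
          exact ω_le_one_add_norm k
      _ = ‖k‖ ^ 2 + ‖k‖ := by ring
      _ ≤ ‖k‖ ^ 2 + ω k := by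
          gcongr
          exact norm_le_ω k
  calc ‖k‖ * B0 k = ‖k‖ / (√(ω k) * (‖k‖ ^ 2 + ω k)) := mul_one_div _ _
    _ ≤ 1 / (√(ω k) * ω k) := by
        rw [div_le_div_iff₀ (by positivity) (by positivity), one_mul, mul_left_comm]
        gcongr
    _ = ω k ^ (-(3 / 2) : ℝ) := by
        rw [Real.sqrt_eq_rpow, ← Real.rpow_add_one hω.ne', one_div, ← Real.rpow_neg hω.le]
        norm_num

lemma memLp_norm_mul_B0_mul_ω_rpow {s : ℝ} (hs : 0 < s) :
    MemLp (fun k => ‖k‖ * B0 k * ω k ^ (-s)) 2 volume := by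
  have h_cont : Continuous fun k => ‖k‖ * B0 k * ω k ^ (-s) :=
    (continuous_norm.mul continuous_B0).mul (continuous_ω_rpow (-s))
  have h_bracket : Integrable
      (fun k : EuclideanSpace ℝ (Fin 3) => (1 + ‖k‖ ^ 2) ^ (-(3 + 2 * s) / 2)) volume :=
    integrable_rpow_neg_one_add_norm_sq (by simpa using hs)
  refine (memLp_two_iff_integrable_sq h_cont.aestronglyMeasurable).2
    (h_bracket.mono' (h_cont.pow 2).aestronglyMeasurable (.of_forall fun k => ?_))
  have hω := ω_pos k
  have hB := B0_pos k
  rw [Real.norm_of_nonneg (by positivity)]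
  calc (‖k‖ * B0 k * ω k ^ (-s)) ^ 2 ≤ (ω k ^ (-(3 / 2) : ℝ) * ω k ^ (-s)) ^ 2 := by
        gcongr
        exact norm_mul_B0_le k
    _ = (ω k ^ 2) ^ (-(3 + 2 * s) / 2) := by
        rw [← Real.rpow_add hω, ← Real.rpow_natCast_mul hω.le, ← Real.rpow_mul_natCast hω.le]
        congr 1
        push_cast
        ring
    _ = (1 + ‖k‖ ^ 2) ^ (-(3 + 2 * s) / 2) := by rw [ω_sq]

end FormFactor

/-- The norm `‖α‖_{h_s}` of the weighted space `L²(ω^{2s} dk)`, with value `∞` when `α` is not in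
that space. -/
def hNorm (s : ℝ) (α : EuclideanSpace ℝ (Fin 3) → ℂ) : ℝ≥0∞ :=
  (∫⁻ k, ENNReal.ofReal (ω k ^ (2 * s) * ‖α k‖ ^ 2)) ^ (1 / 2 : ℝ)

lemma hNorm_eq_eLpNorm (s : ℝ) (α : EuclideanSpace ℝ (Fin 3) → ℂ) :
    hNorm s α = eLpNorm (fun k => ω k ^ s • α k) 2 volume := by
  rw [hNorm, eLpNorm_two_eq_lintegral_ofReal_sq]
  congr! with k
  have hω := ω_pos k
  rw [norm_smul, mul_pow, Real.norm_of_nonneg (by positivity), ← Real.rpow_mul_natCast hω.le,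
    mul_comm 2 s, Nat.cast_ofNat]

lemma lintegral_norm_mul_B0_mul_le {α : EuclideanSpace ℝ (Fin 3) → ℂ}
    (hα : AEStronglyMeasurable α volume) (s : ℝ) :
    ∫⁻ k, ENNReal.ofReal (‖k‖ * B0 k * ‖α k‖) ≤
      eLpNorm (fun k => ‖k‖ * B0 k * ω k ^ (-s)) 2 volume * hNorm s α := by
  have h_factor : ∫⁻ k, ENNReal.ofReal (‖k‖ * B0 k * ‖α k‖) = eLpNorm
      ((fun k => ‖k‖ * B0 k * ω k ^ (-s)) • fun k => ω k ^ s • α k) 1 volume := by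
    rw [eLpNorm_one_eq_lintegral_enorm]
    refine lintegral_congr fun k => ?_
    have hω := ω_pos k
    have hB := B0_pos k
    rw [← ofReal_norm, Pi.smul_apply', smul_smul, mul_assoc _ (ω k ^ (-s)), ← Real.rpow_add hω,
      neg_add_cancel, Real.rpow_zero, mul_one, norm_smul, Real.norm_of_nonneg (by positivity)]
  rw [h_factor, hNorm_eq_eLpNorm]
  exact eLpNorm_smul_le_mul_eLpNorm ((continuous_ω_rpow s).aestronglyMeasurable.smul hα)
    ((continuous_norm.mul continuous_B0).mul (continuous_ω_rpow (-s))).aestronglyMeasurable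

lemma exists_lintegral_norm_mul_B0_mul_le {s : ℝ} (hs : 0 < s) :
    ∃ C > 0, ∀ α : EuclideanSpace ℝ (Fin 3) → ℂ, AEStronglyMeasurable α volume →
      ∫⁻ k, ENNReal.ofReal (‖k‖ * B0 k * ‖α k‖) ≤ ENNReal.ofReal C * hNorm s α := by
  set K := eLpNorm (fun k => ‖k‖ * B0 k * ω k ^ (-s)) 2 volume
  have hK : K ≠ ⊤ := (memLp_norm_mul_B0_mul_ω_rpow hs).eLpNorm_ne_top
  refine ⟨K.toReal + 1, by positivity, fun α hα => ?_⟩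
  refine (lintegral_norm_mul_B0_mul_le hα s).trans (mul_le_mul_left ?_ _)
  exact ENNReal.le_ofReal_iff_toReal_le hK (by positivity) |>.2 (by linarith)

section Dressing

variable {u α : EuclideanSpace ℝ (Fin 3) → ℂ}

lemma integrable_B0_mul (hα : AEStronglyMeasurable α volume)
    (hB : ∫⁻ k, ENNReal.ofReal (B0 k * ‖α k‖) < ⊤) :
    Integrable (fun k => (B0 k : ℂ) * α k) volume := by
  refine ⟨(Complex.continuous_ofReal.comp continuous_B0).aestronglyMeasurable.mul hα, ?_⟩
  simpa only [hasFiniteIntegral_iff_norm, norm_B0_mul] using hB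

lemma integrable_norm_mul_norm_B0_mul (hα : AEStronglyMeasurable α volume)
    (hkB : ∫⁻ k, ENNReal.ofReal (‖k‖ * B0 k * ‖α k‖) < ⊤) :
    Integrable (fun k => ‖k‖ * ‖(B0 k : ℂ) * α k‖) volume := by
  simp only [norm_B0_mul, ← mul_assoc]
  refine ⟨(continuous_norm.mul continuous_B0).aestronglyMeasurable.mul hα.norm, ?_⟩
  refine (hasFiniteIntegral_iff_ofReal (.of_forall fun k => ?_)).2 hkB
  have := B0_pos k
  positivity

lemma phitilde_eq_im_integral_planeWave (α : EuclideanSpace ℝ (Fin 3) → ℂ)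
    (x : EuclideanSpace ℝ (Fin 3)) :
    phitilde α x = 2 * (∫ k, planeWave k x * ((B0 k : ℂ) * α k)).im := by
  simp only [phitilde, planeWave, mul_left_comm, mul_assoc]

lemma FαVec_eq_integral_planeWave (hBα : AEStronglyMeasurable (fun k => (B0 k : ℂ) * α k) volume)
    (hkBα : Integrable (fun k => ‖k‖ * ‖(B0 k : ℂ) * α k‖) volume)
    (x : EuclideanSpace ℝ (Fin 3)) :
    FαVec α x = (2 : ℝ) • ∫ k, (planeWave k x * ((B0 k : ℂ) * α k)).re • k := by
  set f := fun k => planeWave k x * ((B0 k : ℂ) * α k)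
  ext j
  have h_int : Integrable (fun k => (k j : ℂ) * f k) volume := by
    have h_coord : Continuous fun k : EuclideanSpace ℝ (Fin 3) => (k j : ℂ) := by fun_prop
    refine hkBα.mono' (h_coord.aestronglyMeasurable.mul
      ((continuous_planeWave_left x).aestronglyMeasurable.mul hBα)) (.of_forall fun k => ?_)
    rw [norm_mul, norm_mul, norm_planeWave, one_mul, Complex.norm_real]
    gcongr
    exact PiLp.norm_apply_le k j
  calc FαVec α x j = 2 * (∫ k, (k j : ℂ) * f k).re := by
        simp [FαVec, f, planeWave, mul_assoc, mul_left_comm]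
    _ = 2 * ∫ k, ((k j : ℂ) * f k).re := by
        rw [show ∫ k, ((k j : ℂ) * f k).re = (∫ k, (k j : ℂ) * f k).re from integral_re h_int]
    _ = 2 * ∫ k, EuclideanSpace.proj (𝕜 := ℝ) j ((f k).re • k) := by
        simp [mul_comm]
    _ = ((2 : ℝ) • ∫ k, (f k).re • k) j := by
        rw [ContinuousLinearMap.integral_comp_comm _
          (integrable_re_planeWave_mul_smul hBα hkBα x)]
        rfl

lemma norm_FαVec_le (hBα : AEStronglyMeasurable (fun k => (B0 k : ℂ) * α k) volume)
    (hkBα : Integrable (fun k => ‖k‖ * ‖(B0 k : ℂ) * α k‖) volume)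
    (x : EuclideanSpace ℝ (Fin 3)) :
    ‖FαVec α x‖ ≤ 2 * ∫ k, ‖k‖ * ‖(B0 k : ℂ) * α k‖ := by
  rw [FαVec_eq_integral_planeWave hBα hkBα, norm_smul, Real.norm_ofNat]
  gcongr
  exact norm_integral_le_of_norm_le hkBα
    (.of_forall fun k => norm_re_planeWave_mul_smul_le k x _)

lemma hasFDerivAt_tau (hBα : Integrable (fun k => (B0 k : ℂ) * α k) volume)
    (hkBα : Integrable (fun k => ‖k‖ * ‖(B0 k : ℂ) * α k‖) volume)
    (u : EuclideanSpace ℝ (Fin 3) → ℂ) (x : EuclideanSpace ℝ (Fin 3)) :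
    HasFDerivAt (tau u α) (innerSL ℝ (FαVec α x)) x := by
  have h_phitilde : HasFDerivAt (phitilde α) (innerSL ℝ (FαVec α x)) x := by
    rw [funext (phitilde_eq_im_integral_planeWave α),
      FαVec_eq_integral_planeWave hBα.aestronglyMeasurable hkBα, map_smul]
    exact (hasFDerivAt_im_integral_planeWave_mul hBα hkBα x).const_mul 2
  exact h_phitilde.sub_const _

lemma hasFDerivAt_uθ {x : EuclideanSpace ℝ (Fin 3)}
    (hBα : Integrable (fun k => (B0 k : ℂ) * α k) volume)
    (hkBα : Integrable (fun k => ‖k‖ * ‖(B0 k : ℂ) * α k‖) volume)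
    (hu : DifferentiableAt ℝ u x) (θ : ℝ) :
    HasFDerivAt (uθ u α θ) (Complex.exp (-(Complex.I * (θ : ℂ) * (tau u α x : ℂ))) •
      (fderiv ℝ u x -
        (Complex.I * (θ : ℂ) * u x) • Complex.ofRealCLM.comp (innerSL ℝ (FαVec α x)))) x :=
  hasFDerivAt_exp_neg_I_mul_mul (hasFDerivAt_tau hBα hkBα u x) hu.hasFDerivAt θ

lemma norm_fderiv_uθ_le {x : EuclideanSpace ℝ (Fin 3)}
    (hBα : Integrable (fun k => (B0 k : ℂ) * α k) volume)
    (hkBα : Integrable (fun k => ‖k‖ * ‖(B0 k : ℂ) * α k‖) volume)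
    (hu : DifferentiableAt ℝ u x) (θ : ℝ) :
    ‖fderiv ℝ (uθ u α θ) x‖ ≤
      ‖fderiv ℝ u x‖ + (2 * |θ| * ∫ k, ‖k‖ * ‖(B0 k : ℂ) * α k‖) * ‖u x‖ := by
  have hF := norm_FαVec_le hBα.aestronglyMeasurable hkBα x
  rw [(hasFDerivAt_uθ hBα hkBα hu θ).fderiv, norm_smul, norm_exp_neg_I_mul_mul, one_mul]
  calc ‖fderiv ℝ u x -
        (Complex.I * (θ : ℂ) * u x) • Complex.ofRealCLM.comp (innerSL ℝ (FαVec α x))‖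
      ≤ ‖fderiv ℝ u x‖ + |θ| * ‖u x‖ * ‖FαVec α x‖ := by
        refine (norm_sub_le _ _).trans (add_le_add_right ?_ _)
        rw [norm_smul, ← innerSL_apply_norm (𝕜 := ℝ) (FαVec α x)]
        refine mul_le_mul (by simp) ?_ (norm_nonneg _) (by positivity)
        simpa using Complex.ofRealCLM.opNorm_comp_le (innerSL ℝ (FαVec α x))
    _ ≤ ‖fderiv ℝ u x‖ + |θ| * ‖u x‖ * (2 * ∫ k, ‖k‖ * ‖(B0 k : ℂ) * α k‖) := by gcongr
    _ = ‖fderiv ℝ u x‖ + (2 * |θ| * ∫ k, ‖k‖ * ‖(B0 k : ℂ) * α k‖) * ‖u x‖ := by ring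

lemma eLpNorm_fderiv_uθ_le {p : ℝ≥0∞} (hp : 1 ≤ p)
    (hBα : Integrable (fun k => (B0 k : ℂ) * α k) volume)
    (hkBα : Integrable (fun k => ‖k‖ * ‖(B0 k : ℂ) * α k‖) volume)
    (hu : Differentiable ℝ u) (θ : ℝ) :
    eLpNorm (fderiv ℝ (uθ u α θ)) p volume ≤ eLpNorm (fderiv ℝ u) p volume +
      ENNReal.ofReal (2 * |θ|) * (∫⁻ k, ENNReal.ofReal (‖k‖ * B0 k * ‖α k‖)) *
        eLpNorm u p volume := by
  have h_const : ‖2 * |θ| * ∫ k, ‖k‖ * ‖(B0 k : ℂ) * α k‖‖ₑ =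
      ENNReal.ofReal (2 * |θ|) * ∫⁻ k, ENNReal.ofReal (‖k‖ * B0 k * ‖α k‖) := by
    rw [Real.enorm_eq_ofReal (by positivity), ENNReal.ofReal_mul (by positivity),
      ofReal_integral_eq_lintegral_ofReal hkBα (.of_forall fun k => by positivity)]
    simp only [norm_B0_mul, mul_assoc]
  rw [← h_const]
  exact eLpNorm_le_add_mul_of_norm_le hp (measurable_fderiv ℝ u).aestronglyMeasurable
    hu.continuous.aestronglyMeasurable (.of_forall fun x => norm_fderiv_uθ_le hBα hkBα (hu x) θ)

end Dressing

theorem dressing_gradient_general (s : ℝ) (hs : 0 < s) :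
    ∃ C > 0, ∀ (u α : EuclideanSpace ℝ (Fin 3) → ℂ),
      Differentiable ℝ u →
      AEStronglyMeasurable α volume →
      (∫⁻ k, ENNReal.ofReal (B0 k * ‖α k‖) < ⊤) →
      (∫⁻ k, ENNReal.ofReal (‖k‖ * B0 k * ‖α k‖) < ⊤) →
      (∀ x, HasFDerivAt (tau u α) (innerSL ℝ (FαVec α x)) x) ∧
      (∀ θ : ℝ, Differentiable ℝ (uθ u α θ) ∧
        ∀ x v, fderiv ℝ (uθ u α θ) x v =
          Complex.exp (-(Complex.I * (θ : ℂ) * ((tau u α x : ℝ) : ℂ))) *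
            (fderiv ℝ u x v -
              Complex.I * (θ : ℂ) * ((inner ℝ (FαVec α x) v : ℝ) : ℂ) * u x)) ∧
      (∀ θ : ℝ, eLpNorm (fderiv ℝ (uθ u α θ)) 2 volume ≤
        eLpNorm (fderiv ℝ u) 2 volume +
          ENNReal.ofReal (C * |θ|) * hNorm s α * eLpNorm u 2 volume) := by
  obtain ⟨K, hK, h_cauchySchwarz⟩ := exists_lintegral_norm_mul_B0_mul_le hs
  refine ⟨2 * K, by positivity, fun u α hu hα hB hkB => ?_⟩
  have hBα := integrable_B0_mul hα hB
  have hkBα := integrable_norm_mul_norm_B0_mul hα hkB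
  have h_deriv (θ : ℝ) (x : EuclideanSpace ℝ (Fin 3)) := hasFDerivAt_uθ hBα hkBα (hu x) θ
  refine ⟨hasFDerivAt_tau hBα hkBα u,
    fun θ => ⟨fun x => (h_deriv θ x).differentiableAt, fun x v => ?_⟩, fun θ => ?_⟩
  · rw [(h_deriv θ x).fderiv]
    simp [mul_right_comm]
  · refine (eLpNorm_fderiv_uθ_le one_le_two hBα hkBα hu θ).trans ?_
    rw [mul_right_comm 2 K, ENNReal.ofReal_mul (p := 2 * |θ|) (by positivity),
      mul_assoc (ENNReal.ofReal (2 * |θ|)) (ENNReal.ofReal K)]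
    gcongr
    exact h_cauchySchwarz α hα

/-- For differentiable `u` with `u, ∇u ∈ L²`, `‖u‖_{L²} = 1`, and `α` with
`∫ B₀|α| < ∞`, `∫ |k|B₀|α| < ∞`: `τ_{u,α}` is differentiable with `∇τ_{u,α} = F_α`;
consequently `u^θ` is differentiable with `∇u^θ = e^{−iθτ_{u,α}}(∇u − iθF_α u)`, and for
every `s > 0` there is `C = C(s) > 0`, independent of `u, α, θ`, with
`‖∇u^θ‖_{L²} ≤ ‖∇u‖_{L²} + C|θ|‖α‖_{h_s}`. -/
theorem dressing_gradient (s : ℝ) (hs : 0 < s) :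
    ∃ C > 0, ∀ (u α : EuclideanSpace ℝ (Fin 3) → ℂ),
      Differentiable ℝ u → MemLp u 2 volume →
      MemLp (fun x => fderiv ℝ u x) 2 volume →
      (∫ x, ‖u x‖ ^ 2) = 1 →
      Measurable α →
      (∫⁻ k, ENNReal.ofReal (B0 k * ‖α k‖) < ⊤) →
      (∫⁻ k, ENNReal.ofReal (‖k‖ * B0 k * ‖α k‖) < ⊤) →
      (∀ x, HasFDerivAt (tau u α) (innerSL ℝ (FαVec α x)) x) ∧
      (∀ θ : ℝ, Differentiable ℝ (uθ u α θ) ∧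
        ∀ x v, fderiv ℝ (uθ u α θ) x v =
          Complex.exp (-(Complex.I * (θ : ℂ) * ((tau u α x : ℝ) : ℂ))) *
            (fderiv ℝ u x v -
              Complex.I * (θ : ℂ) * ((inner ℝ (FαVec α x) v : ℝ) : ℂ) * u x)) ∧
      (∀ θ : ℝ,
        (∫⁻ x, ENNReal.ofReal (‖fderiv ℝ (uθ u α θ) x‖ ^ 2)) ^ (1 / 2 : ℝ) ≤
          (∫⁻ x, ENNReal.ofReal (‖fderiv ℝ u x‖ ^ 2)) ^ (1 / 2 : ℝ) +
            ENNReal.ofReal (C * |θ|) *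
              (∫⁻ k, ENNReal.ofReal (ω k ^ (2 * s) * ‖α k‖ ^ 2))
                ^ (1 / 2 : ℝ)) := by
  obtain ⟨C, hC, h⟩ := dressing_gradient_general s hs
  refine ⟨C, hC, fun u α hu _ _ hnorm hα hB hkB => ?_⟩
  simpa only [eLpNorm_two_eq_one hnorm, mul_one, eLpNorm_two_eq_lintegral_ofReal_sq, hNorm]
    using h u α hu hα.aestronglyMeasurable hB hkB

end
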